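/- arXiv:1804.00677 — 8 statements merged into one kernel-verified Lean document; each statement's English description precedes it below -/
import Mathlib

section
/- Let Γ=(G,H,t,α), Γ'=(G',H',t',α'), Γ''=(G'',H'',t'',α'') be crossed modules of groups, and let F₁=(φ₁,f₁,η₁): Γ → Γ' and F₂=(φ₂,f₂,η₂): Γ' → Γ'' be crossed intertwiners. Then the triple (φ₂∘φ₁, f₂∘f₁, (g,g') ↦ η₂(φ₁(g),φ₁(g'))·f₂(η₁(g,g'))) is a crossed intertwiner from Γ to Γ''; in particular its third component takes values in ker t''. -/
/-- A crossed module of groups `(G, H, t, α)`. -/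
structure CrossedModule (G H : Type*) [Group G] [Group H] where
  t : H →* G
  α : G → H → H
  α_mul : ∀ (g : G) (h h' : H), α g (h * h') = α g h * α g h'
  α_one : ∀ h : H, α 1 h = h
  α_comp : ∀ (g g' : G) (h : H), α (g * g') h = α g (α g' h)
  peiffer₁ : ∀ h h' : H, α (t h) h' = h * h' * h⁻¹
  peiffer₂ : ∀ (g : G) (h : H), t (α g h) = g * t h * g⁻¹

/-- A crossed intertwiner `(φ, f, η)` between crossed modules; `η` takes values in `ker t'`. -/
structure CrossedIntertwiner {G H G' H' : Type*} [Group G] [Group H] [Group G'] [Group H']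
    (Γ : CrossedModule G H) (Γ' : CrossedModule G' H') where
  φ : G →* G'
  f : H →* H'
  η : G → G → H'
  η_mem_ker : ∀ g g' : G, Γ'.t (η g g') = 1
  CI1 : ∀ h : H, φ (Γ.t h) = Γ'.t (f h)
  CI2 : ∀ h h' : H, η (Γ.t h) (Γ.t h') = 1
  CI4 : ∀ (g : G) (h : H),
    η g (Γ.t h * g⁻¹) * f (Γ.α g h) =
      Γ'.α (φ g) (η (Γ.t h * g⁻¹) g) * Γ'.α (φ g) (f h)
  CI5 : ∀ g g' g'' : G,
    η g g' * η (g * g') g'' = Γ'.α (φ g) (η g' g'') * η g (g' * g'')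

theorem CrossedModule.central {G H : Type*} [Group G] [Group H] (Γ : CrossedModule G H)
    {u : H} (hu : Γ.t u = 1) (h : H) : u * h = h * u := by
  have h1 := Γ.peiffer₁ u h
  rw [hu, Γ.α_one] at h1
  exact (eq_mul_inv_iff_mul_eq.mp h1).symm

theorem CrossedModule.act_one {G H : Type*} [Group G] [Group H] (Γ : CrossedModule G H)
    (g : G) : Γ.α g 1 = 1 := by
  have h := Γ.α_mul g 1 1
  simpa using h

section helpers
variable {G H G' H' : Type*} [Group G] [Group H] [Group G'] [Group H']
    {Γ : CrossedModule G H} {Γ' : CrossedModule G' H'} (F : CrossedIntertwiner Γ Γ')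

theorem CrossedIntertwiner.eta_one_one : F.η 1 1 = 1 := by
  simpa using F.CI2 1 1

theorem CrossedIntertwiner.eta_right (g : G) : F.η g 1 = 1 := by
  have h := F.CI5 g 1 1
  simpa [F.eta_one_one, Γ'.act_one] using h

theorem CrossedIntertwiner.eta_left (g : G) : F.η 1 g = 1 := by
  have h := F.CI5 1 1 g
  simpa [F.eta_one_one, Γ'.α_one] using h

theorem CrossedIntertwiner.equivariant (g : G) {u : H} (hu : Γ.t u = 1) :
    F.f (Γ.α g u) = Γ'.α (F.φ g) (F.f u) := by
  have h4 := F.CI4 g u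
  have h5 := F.CI5 g g⁻¹ g
  simp only [mul_inv_cancel, inv_mul_cancel, F.eta_left, F.eta_right, mul_one] at h5
  rw [hu, one_mul, h5] at h4
  exact mul_left_cancel h4

end helpers

theorem mul_swap_aux {K : Type*} [Group K] {a b c d : K} (h : c * b = b * c) :
    a * b * (c * d) = a * c * (b * d) := by
  rw [mul_assoc, ← mul_assoc b, ← h, mul_assoc c, ← mul_assoc]

/-- the composite of two crossed intertwiners, given by
`(φ₂∘φ₁, f₂∘f₁, (g,g') ↦ η₂(φ₁(g),φ₁(g'))·f₂(η₁(g,g')))`, is again a crossed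
intertwiner (in particular its third component takes values in `ker t''`). -/
theorem composition_of_crossed_intertwiners
    {G H G' H' G'' H'' : Type*} [Group G] [Group H] [Group G'] [Group H']
    [Group G''] [Group H'']
    {Γ : CrossedModule G H} {Γ' : CrossedModule G' H'} {Γ'' : CrossedModule G'' H''}
    (F₁ : CrossedIntertwiner Γ Γ') (F₂ : CrossedIntertwiner Γ' Γ'') :
    ∃ F : CrossedIntertwiner Γ Γ'',
      F.φ = F₂.φ.comp F₁.φ ∧ F.f = F₂.f.comp F₁.f ∧
      ∀ g g' : G, F.η g g' = F₂.η (F₁.φ g) (F₁.φ g') * F₂.f (F₁.η g g') := by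
  refine ⟨⟨F₂.φ.comp F₁.φ, F₂.f.comp F₁.f,
    fun g g' => F₂.η (F₁.φ g) (F₁.φ g') * F₂.f (F₁.η g g'), ?_, ?_, ?_, ?_, ?_⟩, rfl, rfl,
    fun _ _ => rfl⟩
  · intro g g'
    rw [map_mul, F₂.η_mem_ker, ← F₂.CI1, F₁.η_mem_ker, map_one, one_mul]
  · intro h
    simp only [MonoidHom.comp_apply]
    rw [F₁.CI1, F₂.CI1]
  · intro h h'
    rw [F₁.CI2, F₁.CI1, F₁.CI1, F₂.CI2, map_one, one_mul]
  · intro g h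
    have h1 := F₁.CI4 g h
    have h2 := F₂.CI4 (F₁.φ g) (F₁.η (Γ.t h * g⁻¹) g * F₁.f h)
    have ht : Γ'.t (F₁.η (Γ.t h * g⁻¹) g * F₁.f h) = F₁.φ (Γ.t h) := by
      rw [map_mul, F₁.η_mem_ker, one_mul, F₁.CI1]
    rw [ht, Γ'.α_mul, ← h1, ← map_inv, ← map_mul F₁.φ, map_mul F₂.f, map_mul F₂.f,
      Γ''.α_mul] at h2
    simp only [MonoidHom.comp_apply]
    rw [Γ''.α_mul, mul_assoc, h2, mul_assoc]
  · intro g g' g''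
    have h1 := congrArg F₂.f (F₁.CI5 g g' g'')
    have h2 := F₂.CI5 (F₁.φ g) (F₁.φ g') (F₁.φ g'')
    rw [map_mul, map_mul, F₂.equivariant _ (F₁.η_mem_ker _ _)] at h1
    simp only [MonoidHom.comp_apply]
    rw [Γ''.α_mul, map_mul F₁.φ, map_mul F₁.φ]
    have c1 := Γ''.central (F₂.η_mem_ker (F₁.φ g * F₁.φ g') (F₁.φ g''))
      (F₂.f (F₁.η g g'))
    have c2 := Γ''.central (F₂.η_mem_ker (F₁.φ g) (F₁.φ g' * F₁.φ g''))
      (Γ''.α (F₂.φ (F₁.φ g)) (F₂.f (F₁.η g' g'')))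
    rw [mul_swap_aux c1, mul_swap_aux c2, h1, h2]
end

section
/- Let F=(φ,f,η): Γ → Γ' be a crossed intertwiner between crossed modules such that φ and f are group isomorphisms. Define η⁻¹: G' × G' → H by η⁻¹(g,g') := f⁻¹(η(φ⁻¹(g), φ⁻¹(g')))⁻¹. Then (φ⁻¹, f⁻¹, η⁻¹) is a crossed intertwiner Γ' → Γ (in particular η⁻¹ takes values in ker t), and under the composition formula for crossed intertwiners both composites of (φ,f,η) and (φ⁻¹,f⁻¹,η⁻¹) equal the identity crossed intertwiner (id, id, 1). -/
/-- if the components `φ` and `f` of a crossed intertwiner are group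
isomorphisms (given by `e : G ≃* G'` and `e' : H ≃* H'`), then
`(φ⁻¹, f⁻¹, (g,g') ↦ f⁻¹(η(φ⁻¹ g, φ⁻¹ g'))⁻¹)` is a crossed intertwiner in the
other direction (in particular its `η⁻¹` takes values in `ker t`), and both
composites — computed with the composition formula for crossed intertwiners —
equal the identity crossed intertwiner `(id, id, 1)`. -/
theorem crossed_intertwiner_inverse
    {G H G' H' : Type*} [Group G] [Group H] [Group G'] [Group H']
    {Γ : CrossedModule G H} {Γ' : CrossedModule G' H'}
    (F : CrossedIntertwiner Γ Γ') (e : G ≃* G') (e' : H ≃* H')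
    (hφ : ∀ g : G, F.φ g = e g) (hf : ∀ h : H, F.f h = e' h) :
    ∃ Finv : CrossedIntertwiner Γ' Γ,
      (∀ g' : G', Finv.φ g' = e.symm g') ∧
      (∀ h' : H', Finv.f h' = e'.symm h') ∧
      (∀ g g' : G', Finv.η g g' = (e'.symm (F.η (e.symm g) (e.symm g')))⁻¹) ∧
      -- the composite `F ∘ Finv` is the identity crossed intertwiner of `Γ'`:
      (∀ g' : G', F.φ (Finv.φ g') = g') ∧
      (∀ h' : H', F.f (Finv.f h') = h') ∧
      (∀ g g' : G', F.η (Finv.φ g) (Finv.φ g') * F.f (Finv.η g g') = 1) ∧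
      -- the composite `Finv ∘ F` is the identity crossed intertwiner of `Γ`:
      (∀ g : G, Finv.φ (F.φ g) = g) ∧
      (∀ h : H, Finv.f (F.f h) = h) ∧
      (∀ g g' : G, Finv.η (F.φ g) (F.φ g') * Finv.f (F.η g g') = 1) := by
  have cen : ∀ u v : H', Γ'.t u = 1 → u * v = v * u := by
    intro u v hu
    have h := Γ'.peiffer₁ u v
    rw [hu, Γ'.α_one] at h
    exact (eq_mul_inv_iff_mul_eq.mp h).symm
  have α1 : ∀ g, Γ.α g 1 = 1 := by
    intro g
    have h := Γ.α_mul g 1 1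
    rw [mul_one] at h
    exact (left_eq_mul.mp h)
  have α1' : ∀ g, Γ'.α g 1 = 1 := by
    intro g
    have h := Γ'.α_mul g 1 1
    rw [mul_one] at h
    exact (left_eq_mul.mp h)
  have αinv : ∀ g h, Γ.α g h⁻¹ = (Γ.α g h)⁻¹ := by
    intro g h
    rw [eq_inv_iff_mul_eq_one, ← Γ.α_mul, inv_mul_cancel, α1]
  have CI1 : ∀ h, e (Γ.t h) = Γ'.t (e' h) := by
    intro h
    rw [← hφ, ← hf, F.CI1]
  have CI1s : ∀ h, e.symm (Γ'.t h) = Γ.t (e'.symm h) := by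
    intro h
    rw [MulEquiv.symm_apply_eq, CI1, MulEquiv.apply_symm_apply]
  have CI4 := F.CI4
  have CI5 := F.CI5
  simp only [hφ, hf] at CI4 CI5
  have sym : ∀ x, F.η x x⁻¹ = Γ'.α (e x) (F.η x⁻¹ x) := by
    intro x
    have h := CI4 x 1
    simpa [α1, α1'] using h
  have key : ∀ x b, Γ'.t b = 1 → e' (Γ.α x (e'.symm b)) = Γ'.α (e x) b := by
    intro x b hb
    have h := CI4 x (e'.symm b)
    rw [← CI1s, hb, map_one, one_mul, ← sym, MulEquiv.apply_symm_apply] at h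
    exact mul_left_cancel h
  have tα : ∀ x b, Γ'.t b = 1 → Γ'.t (Γ'.α x b) = 1 := by
    intro x b hb
    rw [Γ'.peiffer₂, hb]; simp
  refine ⟨{ φ := e.symm.toMonoidHom
            f := e'.symm.toMonoidHom
            η := fun g g' => (e'.symm (F.η (e.symm g) (e.symm g')))⁻¹
            η_mem_ker := ?_
            CI1 := ?_
            CI2 := ?_
            CI4 := ?_
            CI5 := ?_ }, ?_, ?_, ?_, ?_, ?_, ?_, ?_, ?_, ?_⟩
  · intro g g'
    rw [map_inv, ← CI1s, F.η_mem_ker]; simp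
  · intro h
    exact CI1s h
  · intro h h'
    rw [CI1s, CI1s, F.CI2]; simp
  · intro g h
    obtain ⟨x, rfl⟩ := e.surjective g
    obtain ⟨y, rfl⟩ := e'.surjective h
    apply e'.injective
    have h := CI4 x y
    have ha := F.η_mem_ker x (Γ.t y * x⁻¹)
    have hb := F.η_mem_ker (Γ.t y * x⁻¹) x
    simp only [MulEquiv.toMonoidHom_eq_coe, MonoidHom.coe_coe, map_mul, map_inv, CI1s,
      MulEquiv.symm_apply_apply, MulEquiv.apply_symm_apply, αinv, key _ _ hb]
    rw [inv_mul_eq_iff_eq_mul, ← mul_assoc]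
    have hc := cen _ (Γ'.α (e x) (F.η (Γ.t y * x⁻¹) x))⁻¹ ha
    rw [hc, mul_assoc, h, inv_mul_cancel_left]
  · intro g g' g''
    obtain ⟨x, rfl⟩ := e.surjective g
    obtain ⟨y, rfl⟩ := e.surjective g'
    obtain ⟨z, rfl⟩ := e.surjective g''
    apply e'.injective
    have h := CI5 x y z
    have hb := F.η_mem_ker y z
    simp only [MulEquiv.toMonoidHom_eq_coe, MonoidHom.coe_coe, map_mul, map_inv,
      MulEquiv.symm_apply_apply, MulEquiv.apply_symm_apply, αinv, key _ _ hb]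
    rw [← mul_inv_rev, ← mul_inv_rev, ← cen _ _ (F.η_mem_ker x y), h, cen _ _ (tα _ _ hb)]
  all_goals simp [hφ, hf]
end

section
/- The triple flip = (φ, f, η) with φ(a⊕â) := â⊕a, f(m⊕m̂, s) := (m̂⊕m, s), and η(x,x') := (0, [x,x'] mod ℤ) is a crossed intertwiner from TD[n] to itself: (CI1) φ(t(h)) = t(f(h)); (CI2) η(t(h), t(h')) = 0; (CI4) η(x, t(h)−x) + f(α(x,h)) = η(t(h)−x, x) + α(φ(x), f(h)); (CI5) η(x,x') + η(x+x', x'') = η(x',x'') + η(x, x'+x'') hold for all x,x',x'' ∈ ℝ^{2n} and h,h' ∈ ℤ^{2n} × 𝕋. (Here the action α of ℝ^{2n} on the kernel {0} × 𝕋 of t is trivial, so the general crossed intertwiner axioms CI4 and CI5 take the stated form.) -/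
noncomputable section

/-- The additive circle `𝕋 := ℝ/ℤ`. -/
abbrev Torus : Type := AddCircle (1 : ℝ)

/-- `G = ℝ^{2n}`, written as pairs `a ⊕ â` with `a, â ∈ ℝⁿ`. -/
abbrev TDG (n : ℕ) : Type := (Fin n → ℝ) × (Fin n → ℝ)

/-- `H = ℤ^{2n} × 𝕋`. -/
abbrev TDH (n : ℕ) : Type := ((Fin n → ℤ) × (Fin n → ℤ)) × Torus

/-- The pairing `[x,y] := Σ_{i=1}^{n} x_{n+i} · y_i`, i.e. `[a₁⊕â₁, a₂⊕â₂] = â₁·a₂`. -/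
def TDpair {n : ℕ} (x y : TDG n) : ℝ := ∑ i, x.2 i * y.1 i

/-- `t(z,s) := z ∈ ℝ^{2n}`. -/
def TDt {n : ℕ} (h : TDH n) : TDG n :=
  (fun i => (h.1.1 i : ℝ), fun i => (h.1.2 i : ℝ))

/-- `α(x,(z,s)) := (z, s − [x,z] mod ℤ)`. -/
def TDα {n : ℕ} (x : TDG n) (h : TDH n) : TDH n :=
  (h.1, h.2 - ((TDpair x (TDt h) : ℝ) : Torus))

/-- `φ(a⊕â) := â⊕a`. -/
def flipφ {n : ℕ} (x : TDG n) : TDG n := (x.2, x.1)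

/-- `f(m⊕m̂, s) := (m̂⊕m, s)`. -/
def flipf {n : ℕ} (h : TDH n) : TDH n := ((h.1.2, h.1.1), h.2)

/-- `η(x,x') := (0, [x,x'] mod ℤ)`. -/
def flipη {n : ℕ} (x x' : TDG n) : TDH n := ((0, 0), ((TDpair x x' : ℝ) : Torus))

/-- `flip = (φ, f, η)` is a crossed intertwiner from `TD[n]` to itself:
`φ` and `f` are additive homomorphisms, `η` takes values in `ker t`, and the
axioms (CI1) `φ(t(h)) = t(f(h))`, (CI2) `η(t(h),t(h')) = 0`,
(CI4) `η(x, t(h)−x) + f(α(x,h)) = η(t(h)−x, x) + α(φ(x), f(h))`, and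
(CI5) `η(x,x') + η(x+x',x'') = η(x',x'') + η(x, x'+x'')` hold (the action of
`ℝ^{2n}` on `ker t = {0} × 𝕋` being trivial). -/
theorem flip_is_crossed_intertwiner (n : ℕ) (hn : 1 ≤ n) :
    (∀ x x' : TDG n, flipφ (x + x') = flipφ x + flipφ x') ∧
    (∀ h h' : TDH n, flipf (h + h') = flipf h + flipf h') ∧
    (∀ x x' : TDG n, TDt (flipη x x') = 0) ∧
    (∀ h : TDH n, flipφ (TDt h) = TDt (flipf h)) ∧
    (∀ h h' : TDH n, flipη (TDt h) (TDt h') = 0) ∧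
    (∀ (x : TDG n) (h : TDH n),
        flipη x (TDt h - x) + flipf (TDα x h) =
          flipη (TDt h - x) x + TDα (flipφ x) (flipf h)) ∧
    (∀ x x' x'' : TDG n,
        flipη x x' + flipη (x + x') x'' = flipη x' x'' + flipη x (x' + x'')) := by
  refine ⟨fun _ _ => rfl, fun _ _ => rfl, ?_, fun _ => rfl, ?_, ?_, ?_⟩
  · intro x x'
    ext i <;> simp [TDt, flipη]
  · intro h h'
    refine Prod.ext rfl ?_
    change ((TDpair (TDt h) (TDt h') : ℝ) : Torus) = 0
    rw [AddCircle.coe_eq_zero_iff]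
    refine ⟨∑ i, h.1.2 i * h'.1.1 i, ?_⟩
    simp [TDpair, TDt]
  · intro x h
    refine Prod.ext (by simp [flipη, flipf, TDα]) ?_
    change ((TDpair x (TDt h - x) : ℝ) : Torus) + (h.2 - ((TDpair x (TDt h) : ℝ) : Torus)) =
      ((TDpair (TDt h - x) x : ℝ) : Torus) +
        (h.2 - ((TDpair (flipφ x) (TDt (flipf h)) : ℝ) : Torus))
    have e1 : TDpair x (TDt h - x) = TDpair x (TDt h) - TDpair x x := by
      simp [TDpair, mul_sub, Finset.sum_sub_distrib]
    have e2 : TDpair (TDt h - x) x = TDpair (flipφ x) (TDt (flipf h)) - TDpair x x := by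
      simp [TDpair, mul_sub, Finset.sum_sub_distrib, flipφ, flipf, TDt, mul_comm]
    rw [e1, e2, AddCircle.coe_sub, AddCircle.coe_sub]
    abel
  · intro x x' x''
    refine Prod.ext (by simp [flipη]) ?_
    change ((TDpair x x' : ℝ) : Torus) + ((TDpair (x + x') x'' : ℝ) : Torus) =
      ((TDpair x' x'' : ℝ) : Torus) + ((TDpair x (x' + x'') : ℝ) : Torus)
    rw [← AddCircle.coe_add, ← AddCircle.coe_add]
    congr 1
    simp only [TDpair, ← Finset.sum_add_distrib]
    refine Finset.sum_congr rfl fun i _ => ?_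
    simp only [Prod.snd_add, Prod.fst_add, Pi.add_apply]
    ring
end
end

section
/- For every skew-symmetric n×n integer matrix B, the triple F_{e^B} = (φ_{e^B}, f_{e^B}, η_{e^B}) with φ_{e^B}(a⊕â) := a ⊕ (Ba + â), f_{e^B}(m⊕m̂, s) := (m ⊕ (Bm + m̂), s), and η_{e^B}(a⊕â, b⊕b̂) := (0, ⌊a|B|b⌋ mod ℤ) is a crossed intertwiner from TD[n] to itself, i.e. axioms CI1, CI2, CI4 and CI5 hold (CI2 uses that ⌊m|B|m'⌋ ∈ ℤ for integer vectors m, m', and CI4 uses the skew-symmetry of B). -/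
open Matrix

noncomputable section

/-- `⌊v|B|w⌋ := Σ_{i>j} B_{ij} vᵢ wⱼ` (pairing with the strictly lower-triangular
part of the skew-symmetric matrix `B`). -/
def lbrak {n : ℕ} (B : Matrix (Fin n) (Fin n) ℤ) (v w : Fin n → ℝ) : ℝ :=
  ∑ i, ∑ j, if j < i then (B i j : ℝ) * v i * w j else 0

/-- `φ_{e^B}(a⊕â) := a ⊕ (Ba + â)`. -/
def eBφ {n : ℕ} (B : Matrix (Fin n) (Fin n) ℤ) (x : TDG n) : TDG n :=
  (x.1, fun i => (∑ j, (B i j : ℝ) * x.1 j) + x.2 i)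

/-- `f_{e^B}(m⊕m̂, s) := (m ⊕ (Bm + m̂), s)`. -/
def eBf {n : ℕ} (B : Matrix (Fin n) (Fin n) ℤ) (h : TDH n) : TDH n :=
  ((h.1.1, fun i => (∑ j, B i j * h.1.1 j) + h.1.2 i), h.2)

/-- `η_{e^B}(a⊕â, b⊕b̂) := (0, ⌊a|B|b⌋ mod ℤ)`. -/
def eBη {n : ℕ} (B : Matrix (Fin n) (Fin n) ℤ) (x x' : TDG n) : TDH n :=
  ((0, 0), ((lbrak B x.1 x'.1 : ℝ) : Torus))

theorem lbrak_add_left {n : ℕ} (B : Matrix (Fin n) (Fin n) ℤ) (u v w : Fin n → ℝ) :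
    lbrak B (u + v) w = lbrak B u w + lbrak B v w := by
  unfold lbrak
  simp only [← Finset.sum_add_distrib]
  refine Finset.sum_congr rfl fun i _ => Finset.sum_congr rfl fun j _ => ?_
  split_ifs
  · simp only [Pi.add_apply]; ring
  · simp

theorem lbrak_add_right {n : ℕ} (B : Matrix (Fin n) (Fin n) ℤ) (u v w : Fin n → ℝ) :
    lbrak B u (v + w) = lbrak B u v + lbrak B u w := by
  unfold lbrak
  simp only [← Finset.sum_add_distrib]
  refine Finset.sum_congr rfl fun i _ => Finset.sum_congr rfl fun j _ => ?_
  split_ifs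
  · simp only [Pi.add_apply]; ring
  · simp

theorem lbrak_skew {n : ℕ} (B : Matrix (Fin n) (Fin n) ℤ) (hB : Bᵀ = -B)
    (v w : Fin n → ℝ) :
    lbrak B v w + ∑ i, (∑ j, (B i j : ℝ) * v j) * w i = lbrak B w v := by
  have hs : ∀ i j, (B j i : ℝ) = -(B i j : ℝ) := by
    intro i j
    have := congrFun (congrFun hB i) j
    simp only [Matrix.transpose_apply, Matrix.neg_apply] at this
    rw [this]; push_cast; rfl
  have h1 : lbrak B v w = ∑ i, ∑ j, if i < j then (B j i : ℝ) * v j * w i else 0 := by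
    unfold lbrak
    exact Finset.sum_comm
  rw [h1]
  unfold lbrak
  simp only [Finset.sum_mul, ← Finset.sum_add_distrib]
  refine Finset.sum_congr rfl fun i _ => Finset.sum_congr rfl fun j _ => ?_
  rcases lt_trichotomy i j with h | h | h
  · rw [if_pos h, if_neg h.not_gt, hs i j]; ring
  · subst h
    have : (B i i : ℝ) = 0 := by linarith [hs i i]
    simp [this]
  · rw [if_pos h, if_neg h.not_gt]; ring

theorem lbrak_int {n : ℕ} (B : Matrix (Fin n) (Fin n) ℤ) (v w : Fin n → ℤ) :
    ((lbrak B (fun i => (v i : ℝ)) (fun i => (w i : ℝ)) : ℝ) : Torus) = 0 := by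
  rw [AddCircle.coe_eq_zero_iff]
  refine ⟨∑ i, ∑ j, if j < i then B i j * v i * w j else 0, ?_⟩
  unfold lbrak
  simp

/-- for every skew-symmetric `n×n` integer matrix `B`, the triple
`F_{e^B} = (φ_{e^B}, f_{e^B}, η_{e^B})` is a crossed intertwiner from `TD[n]` to
itself: `φ_{e^B}` and `f_{e^B}` are additive homomorphisms, `η_{e^B}` takes values
in `ker t`, and the axioms CI1, CI2, CI4 and CI5 hold. -/
theorem eB_is_crossed_intertwiner (n : ℕ) (hn : 1 ≤ n)
    (B : Matrix (Fin n) (Fin n) ℤ) (hB : Bᵀ = -B) :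
    (∀ x x' : TDG n, eBφ B (x + x') = eBφ B x + eBφ B x') ∧
    (∀ h h' : TDH n, eBf B (h + h') = eBf B h + eBf B h') ∧
    (∀ x x' : TDG n, TDt (eBη B x x') = 0) ∧
    (∀ h : TDH n, eBφ B (TDt h) = TDt (eBf B h)) ∧
    (∀ h h' : TDH n, eBη B (TDt h) (TDt h') = 0) ∧
    (∀ (x : TDG n) (h : TDH n),
        eBη B x (TDt h - x) + eBf B (TDα x h) =
          TDα (eBφ B x) (eBη B (TDt h - x) x) + TDα (eBφ B x) (eBf B h)) ∧
    (∀ x x' x'' : TDG n,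
        eBη B x x' + eBη B (x + x') x'' =
          TDα (eBφ B x) (eBη B x' x'') + eBη B x (x' + x'')) := by
  refine ⟨?_, ?_, ?_, ?_, ?_, ?_, ?_⟩
  · intro x x'
    refine Prod.ext rfl (funext fun i => ?_)
    simp only [eBφ, Prod.fst_add, Prod.snd_add, Pi.add_apply, mul_add, Finset.sum_add_distrib]
    ring
  · intro h h'
    refine Prod.ext (Prod.ext rfl (funext fun i => ?_)) rfl
    simp only [eBf, Prod.fst_add, Prod.snd_add, Pi.add_apply, mul_add, Finset.sum_add_distrib]
    ring
  · intro x x'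
    refine Prod.ext (funext fun i => ?_) (funext fun i => ?_) <;> simp [TDt, eBη]
  · intro h
    refine Prod.ext rfl (funext fun i => ?_)
    simp [TDt, eBφ, eBf]
  · intro h h'
    exact Prod.ext rfl (lbrak_int B h.1.1 h'.1.1)
  · intro x h
    refine Prod.ext rfl ?_
    have key : lbrak B x.1 (TDt h - x).1 - TDpair x (TDt h)
        = lbrak B (TDt h - x).1 x.1 - TDpair (eBφ B x) (TDt (eBf B h)) := by
      have e1 : lbrak B x.1 (TDt h - x).1 + lbrak B x.1 x.1 = lbrak B x.1 (TDt h).1 := by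
        rw [← lbrak_add_right]; simp
      have e2 : lbrak B (TDt h - x).1 x.1 + lbrak B x.1 x.1 = lbrak B (TDt h).1 x.1 := by
        rw [← lbrak_add_left]; simp
      have e3 := lbrak_skew B hB x.1 (TDt h).1
      have e4 : TDpair (eBφ B x) (TDt (eBf B h))
          = ∑ i, (∑ j, (B i j : ℝ) * x.1 j) * (TDt h).1 i + TDpair x (TDt h) := by
        simp only [TDpair, eBφ, TDt, eBf, add_mul, Finset.sum_add_distrib]
      linarith
    have key' := congrArg (fun r : ℝ => (r : Torus)) key
    simp only [AddCircle.coe_sub] at key'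
    have z : TDpair (eBφ B x) (TDt (eBη B (TDt h - x) x)) = 0 := by
      simp [TDpair, TDt, eBη]
    change ((lbrak B x.1 (TDt h - x).1 : ℝ) : Torus) + (h.2 - ((TDpair x (TDt h) : ℝ) : Torus))
      = (((lbrak B (TDt h - x).1 x.1 : ℝ) : Torus)
          - ((TDpair (eBφ B x) (TDt (eBη B (TDt h - x) x)) : ℝ) : Torus))
        + (h.2 - ((TDpair (eBφ B x) (TDt (eBf B h)) : ℝ) : Torus))
    rw [z, AddCircle.coe_zero, sub_zero, add_sub_left_comm, key', add_sub_left_comm]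
  · intro x x' x''
    refine Prod.ext rfl ?_
    have z : TDpair (eBφ B x) (TDt (eBη B x' x'')) = 0 := by
      simp [TDpair, TDt, eBη]
    change ((lbrak B x.1 x'.1 : ℝ) : Torus) + ((lbrak B (x.1 + x'.1) x''.1 : ℝ) : Torus)
      = (((lbrak B x'.1 x''.1 : ℝ) : Torus)
          - ((TDpair (eBφ B x) (TDt (eBη B x' x'')) : ℝ) : Torus))
        + ((lbrak B x.1 (x'.1 + x''.1) : ℝ) : Torus)
    rw [z, AddCircle.coe_zero, sub_zero, lbrak_add_left, lbrak_add_right,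
      AddCircle.coe_add, AddCircle.coe_add]
    abel
end
end

section
/- For all B₁, B₂ ∈ 𝔰𝔬(n,ℤ), under the composition formula for crossed intertwiners one has F_{e^{B₂}} ∘ F_{e^{B₁}} = F_{e^{B₁+B₂}} (componentwise: φ_{e^{B₂}}∘φ_{e^{B₁}} = φ_{e^{B₁+B₂}}, f_{e^{B₂}}∘f_{e^{B₁}} = f_{e^{B₁+B₂}}, and η_{e^{B₂}}(φ_{e^{B₁}}(x), φ_{e^{B₁}}(x')) + f_{e^{B₂}}(η_{e^{B₁}}(x,x')) = η_{e^{B₁+B₂}}(x,x')), and F_{e^0} is the identity crossed intertwiner. Hence B ↦ F_{e^B} is an action of the additive group 𝔰𝔬(n,ℤ) on TD[n] by crossed intertwiners. -/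
open Matrix

noncomputable section

theorem lbrak_add {n : ℕ} (B C : Matrix (Fin n) (Fin n) ℤ) (v w : Fin n → ℝ) :
    lbrak (B + C) v w = lbrak B v w + lbrak C v w := by
  unfold lbrak
  simp only [← Finset.sum_add_distrib]
  refine Finset.sum_congr rfl fun i _ => Finset.sum_congr rfl fun j _ => ?_
  split_ifs
  · simp only [Matrix.add_apply]
    push_cast
    ring
  · simp

/-- under the composition formula for crossed intertwiners,
`F_{e^{B₂}} ∘ F_{e^{B₁}} = F_{e^{B₁+B₂}}` componentwise, and `F_{e^0}` is the
identity crossed intertwiner; hence `B ↦ F_{e^B}` is an action of the additive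
group `𝔰𝔬(n,ℤ)` on `TD[n]` by crossed intertwiners. -/
theorem eB_is_so_n_Z_action (n : ℕ) (hn : 1 ≤ n)
    (B₁ B₂ : Matrix (Fin n) (Fin n) ℤ) (hB₁ : B₁ᵀ = -B₁) (hB₂ : B₂ᵀ = -B₂) :
    (∀ x : TDG n, eBφ B₂ (eBφ B₁ x) = eBφ (B₁ + B₂) x) ∧
    (∀ h : TDH n, eBf B₂ (eBf B₁ h) = eBf (B₁ + B₂) h) ∧
    (∀ x x' : TDG n,
        eBη B₂ (eBφ B₁ x) (eBφ B₁ x') + eBf B₂ (eBη B₁ x x') = eBη (B₁ + B₂) x x') ∧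
    (∀ x : TDG n, eBφ (0 : Matrix (Fin n) (Fin n) ℤ) x = x) ∧
    (∀ h : TDH n, eBf (0 : Matrix (Fin n) (Fin n) ℤ) h = h) ∧
    (∀ x x' : TDG n, eBη (0 : Matrix (Fin n) (Fin n) ℤ) x x' = 0) := by
  refine ⟨fun x => ?_, fun h => ?_, fun x x' => ?_, fun x => ?_, fun h => ?_, fun x x' => ?_⟩
  · refine Prod.ext rfl (funext fun i => ?_)
    simp only [eBφ, Matrix.add_apply, Int.cast_add, add_mul, Finset.sum_add_distrib]
    ring
  · refine Prod.ext (Prod.ext rfl (funext fun i => ?_)) rfl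
    simp only [eBf, Matrix.add_apply, add_mul, Finset.sum_add_distrib]
    ring
  · refine Prod.ext (Prod.ext ?_ (funext fun i => ?_)) ?_
    · simp [eBη, eBf]
    · simp [eBη, eBf]
    · simp only [eBη, eBf, eBφ, Prod.snd_add, lbrak_add]
      rw [add_comm, AddCircle.coe_add]
  · refine Prod.ext rfl (funext fun i => ?_)
    simp [eBφ]
  · refine Prod.ext (Prod.ext rfl (funext fun i => ?_)) rfl
    simp [eBf]
  · simp [eBη, lbrak]
end
end

section
/- The triple releR = (φ, f, 0) with φ(a⊕â) := â and f(m⊕m̂, s) := (τ_{s,m}, m̂) is a strict crossed intertwiner TD[n] → TBFFR[n]: φ(t(h)) = t'(f(h)) and f(α(x,h)) = α'(φ(x), f(h)) for all x ∈ ℝ^{2n} and h ∈ ℤ^{2n} × 𝕋; pointwise the latter reads s − â·m + m·c = s + m·(c − â) in 𝕋 for all c ∈ 𝕋ⁿ. Moreover the composite releR ∘ flip, computed with the composition formula for crossed intertwiners, equals the triple leleR given by φ(a⊕â) = a, f(m⊕m̂, s) = (τ_{s,m̂}, m), and η(a₁⊕â₁, a₂⊕â₂) = (the constant map with value â₁·a₂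 mod ℤ, 0). -/
noncomputable section

/-- Elements of `H'` of `TBFFR[n]`: pairs of a map `τ : 𝕋ⁿ → 𝕋` and `m ∈ ℤⁿ`. -/
abbrev TBH (n : ℕ) : Type := ((Fin n → Torus) → Torus) × (Fin n → ℤ)

/-- `t'(τ, m) := m ∈ ℝⁿ` of `TBFFR[n]`. -/
def TBt {n : ℕ} (h : TBH n) : Fin n → ℝ := fun i => (h.2 i : ℝ)

/-- `α'(g,(τ,m)) := (c ↦ τ(c − g), m)` of `TBFFR[n]`. -/
def TBα {n : ℕ} (g : Fin n → ℝ) (h : TBH n) : TBH n :=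
  (fun c => h.1 (c - fun i => ((g i : ℝ) : Torus)), h.2)

/-- `releR`: `φ(a⊕â) := â`. -/
def releRφ {n : ℕ} (x : TDG n) : Fin n → ℝ := x.2

/-- `releR`: `f(m⊕m̂, s) := (τ_{s,m}, m̂)`, where `τ_{s,m}(c) := s + m·c`. -/
def releRf {n : ℕ} (h : TDH n) : TBH n :=
  (fun c => h.2 + ∑ i, h.1.1 i • c i, h.1.2)

/-- `leleR`: `φ(a⊕â) := a`. -/
def leleRφ {n : ℕ} (x : TDG n) : Fin n → ℝ := x.1

/-- `leleR`: `f(m⊕m̂, s) := (τ_{s,m̂}, m)`, where `τ_{s,m̂}(c) := s + m̂·c`. -/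
def leleRf {n : ℕ} (h : TDH n) : TBH n :=
  (fun c => h.2 + ∑ i, h.1.2 i • c i, h.1.1)

/-- `leleR`: `η(a₁⊕â₁, a₂⊕â₂) := (the constant map with value â₁·a₂ mod ℤ, 0)`. -/
def leleRη {n : ℕ} (x x' : TDG n) : TBH n :=
  (fun _ => ((TDpair x x' : ℝ) : Torus), 0)

/-- `releR = (φ, f, 0)` is a strict crossed intertwiner
`TD[n] → TBFFR[n]`: `φ` and `f` are additive homomorphisms with `φ ∘ t = t' ∘ f`
and `f(α(x,h)) = α'(φ(x), f(h))` (pointwise: `s − â·m + m·c = s + m·(c − â)` in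
`𝕋`); moreover the composite `releR ∘ flip`, computed with the composition
formula for crossed intertwiners, equals `leleR` componentwise. -/
theorem releR_strict_and_comp_flip_eq_leleR (n : ℕ) (hn : 1 ≤ n) :
    (∀ x x' : TDG n, releRφ (x + x') = releRφ x + releRφ x') ∧
    (∀ h h' : TDH n, releRf (h + h') = releRf h + releRf h') ∧
    (∀ h : TDH n, releRφ (TDt h) = TBt (releRf h)) ∧
    (∀ (x : TDG n) (h : TDH n), releRf (TDα x h) = TBα (releRφ x) (releRf h)) ∧
    (∀ x : TDG n, releRφ (flipφ x) = leleRφ x) ∧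
    (∀ h : TDH n, releRf (flipf h) = leleRf h) ∧
    (∀ x x' : TDG n, (0 : TBH n) + releRf (flipη x x') = leleRη x x') := by
  refine ⟨fun _ _ => rfl, ?_, fun _ => rfl, ?_, fun _ => rfl, fun _ => rfl, ?_⟩
  · intro h h'
    refine Prod.ext (funext fun c => ?_) rfl
    simp only [releRf, Prod.fst_add, Prod.snd_add, Pi.add_apply, add_smul,
      Finset.sum_add_distrib]
    abel
  · intro x h
    refine Prod.ext (funext fun c => ?_) rfl
    have key : ((TDpair x (TDt h) : ℝ) : Torus)
        = ∑ i, h.1.1 i • ((x.2 i : ℝ) : Torus) := by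
      have e : TDpair x (TDt h) = ∑ i, h.1.1 i • x.2 i := by
        simp only [TDpair, TDt, zsmul_eq_mul]
        exact Finset.sum_congr rfl fun i _ => mul_comm _ _
      rw [e]
      exact map_sum (QuotientAddGroup.mk' (AddSubgroup.zmultiples (1 : ℝ))) _ _
    simp only [releRf, TDα, TBα, releRφ, Pi.sub_apply, smul_sub,
      Finset.sum_sub_distrib, key]
    abel
  · intro x x'
    refine Prod.ext (funext fun c => ?_) ?_
    · simp [releRf, flipη, leleRη]
    · simp [releRf, flipη, leleRη]
end
end

section
/- The triple leleR = (φ, f, η) with φ(a⊕â) := a, f(m⊕m̂, s) := (τ_{s,m̂}, m), and η(a₁⊕â₁, a₂⊕â₂) := (the constant map with value â₁·a₂ mod ℤ, 0) is a crossed intertwiner TD[n] → TBFFR[n]: (CI1) φ(t(h)) = t'(f(h)); (CI2) the constant m̂·m' ∈ ℤ vanishes in 𝕋 for integer vectors, so η(t(h), t(h')) = 0; (CI4) η(x, t(h)−x) + f(α(x,h)) = η(t(h)−x, x) + α'(φ(x), f(h)), which pointwise at c ∈ 𝕋ⁿ reads â·(m−a) + (s − â·m) + m̂·c = (m̂−â)·a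 + s + m̂·(c−a) in 𝕋; (CI5) η(x₁,x₂) + η(x₁+x₂, x₃) = η(x₂,x₃) + η(x₁, x₂+x₃). -/
noncomputable section

/-- `leleR = (φ, f, η)` is a crossed intertwiner
`TD[n] → TBFFR[n]`: `φ` and `f` are additive homomorphisms, `η` takes values in
`ker t'`, and the axioms (CI1) `φ(t(h)) = t'(f(h))`; (CI2) `η(t(h),t(h')) = 0`;
(CI4) `η(x, t(h)−x) + f(α(x,h)) = η(t(h)−x, x) + α'(φ(x), f(h))`;
(CI5) `η(x₁,x₂) + η(x₁+x₂,x₃) = η(x₂,x₃) + η(x₁, x₂+x₃)` all hold. -/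
theorem leleR_is_crossed_intertwiner (n : ℕ) (hn : 1 ≤ n) :
    (∀ x x' : TDG n, leleRφ (x + x') = leleRφ x + leleRφ x') ∧
    (∀ h h' : TDH n, leleRf (h + h') = leleRf h + leleRf h') ∧
    (∀ x x' : TDG n, TBt (leleRη x x') = 0) ∧
    (∀ h : TDH n, leleRφ (TDt h) = TBt (leleRf h)) ∧
    (∀ h h' : TDH n, leleRη (TDt h) (TDt h') = 0) ∧
    (∀ (x : TDG n) (h : TDH n),
        leleRη x (TDt h - x) + leleRf (TDα x h) =
          leleRη (TDt h - x) x + TBα (leleRφ x) (leleRf h)) ∧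
    (∀ x₁ x₂ x₃ : TDG n,
        leleRη x₁ x₂ + leleRη (x₁ + x₂) x₃ = leleRη x₂ x₃ + leleRη x₁ (x₂ + x₃)) := by
  have pair_add_left : ∀ x y z : TDG n, TDpair (x + y) z = TDpair x z + TDpair y z := by
    intro x y z
    simp [TDpair, add_mul, Finset.sum_add_distrib]
  have pair_add_right : ∀ x y z : TDG n, TDpair x (y + z) = TDpair x y + TDpair x z := by
    intro x y z
    simp [TDpair, mul_add, Finset.sum_add_distrib]
  have pair_sub_left : ∀ x y z : TDG n, TDpair (x - y) z = TDpair x z - TDpair y z := by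
    intro x y z
    simp [TDpair, sub_mul, Finset.sum_sub_distrib]
  have pair_sub_right : ∀ x y z : TDG n, TDpair x (y - z) = TDpair x y - TDpair x z := by
    intro x y z
    simp [TDpair, mul_sub, Finset.sum_sub_distrib]
  have pair_t : ∀ (h : TDH n) (x : TDG n),
      ((TDpair (TDt h) x : ℝ) : Torus) = ∑ i, h.1.2 i • ((x.1 i : ℝ) : Torus) := by
    intro h x
    have e : TDpair (TDt h) x = ∑ i, h.1.2 i • x.1 i := by
      simp [TDpair, TDt]
    rw [e]
    have := map_sum (QuotientAddGroup.mk' (AddSubgroup.zmultiples (1 : ℝ)))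
      (fun i => h.1.2 i • x.1 i) Finset.univ
    exact this
  refine ⟨fun _ _ => rfl, ?_, ?_, fun _ => rfl, ?_, ?_, ?_⟩
  · intro h h'
    refine Prod.ext (funext fun c => ?_) rfl
    simp only [leleRf, Prod.fst_add, Prod.snd_add, Pi.add_apply, add_smul,
      Finset.sum_add_distrib]
    abel
  · intro x x'
    funext i
    simp [TBt, leleRη]
  · intro h h'
    refine Prod.ext (funext fun c => ?_) rfl
    change ((TDpair (TDt h) (TDt h') : ℝ) : Torus) = 0
    rw [AddCircle.coe_eq_zero_iff]
    exact ⟨∑ i, h.1.2 i * h'.1.1 i, by simp [TDpair, TDt]⟩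
  · intro x h
    refine Prod.ext (funext fun c => ?_) rfl
    change ((TDpair x (TDt h - x) : ℝ) : Torus)
        + ((h.2 - ((TDpair x (TDt h) : ℝ) : Torus)) + ∑ i, h.1.2 i • c i)
      = ((TDpair (TDt h - x) x : ℝ) : Torus)
        + (h.2 + ∑ i, h.1.2 i • (c i - ((x.1 i : ℝ) : Torus)))
    rw [pair_sub_right, pair_sub_left, AddCircle.coe_sub, AddCircle.coe_sub, pair_t h x]
    simp only [smul_sub, Finset.sum_sub_distrib]
    abel
  · intro x y z
    refine Prod.ext (funext fun c => ?_) rfl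
    change ((TDpair x y : ℝ) : Torus) + ((TDpair (x + y) z : ℝ) : Torus)
      = ((TDpair y z : ℝ) : Torus) + ((TDpair x (y + z) : ℝ) : Torus)
    rw [pair_add_left, pair_add_right, AddCircle.coe_add, AddCircle.coe_add]
    abel
end
end

section
/- The left-leg crossed intertwiner leleR: TD[n] → TBFFR[n] is strictly equivariant for the 𝔰𝔬(n,ℤ)-actions by crossed intertwiners on both sides; explicitly, for every B ∈ 𝔰𝔬(n,ℤ): (i) id_{ℝⁿ} ∘ φ = φ ∘ φ_{e^B}, i.e. the ℝⁿ-component of φ_{e^B}(a⊕â) is a; (ii) f_B ∘ f = f ∘ f_{e^B}, which pointwise reads s + m̂·c − ⟨m|B|c⟩ = s + (Bm + m̂)·c in 𝕋 for all m, m̂ ∈ ℤⁿ, s ∈ 𝕋, c ∈ 𝕋ⁿ; (iii) η_B(φ(x₁), φ(x₂)) + f_B(η(x₁,x₂)) = η(φ_{e^B}(x₁), φ_{e^B}(x₂)) + f(η_{e^B}(x₁,x₂)), which pointwise reads ⌊a₂|B|a₁⌋ + â₁·a₂ ≡ (Ba₁ + â₁)·a₂ + ⌊a₁|B|a₂⌋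 mod ℤ for all a₁,â₁,a₂,â₂ ∈ ℝⁿ. -/
open Matrix

noncomputable section

/-- The well-defined map `⟨m|B|·⟩ : 𝕋ⁿ → 𝕋`, `c ↦ Σ_{i,j} B_{ij} mᵢ cⱼ`. -/
def braB {n : ℕ} (B : Matrix (Fin n) (Fin n) ℤ) (m : Fin n → ℤ) (c : Fin n → Torus) : Torus :=
  ∑ i, ∑ j, (B i j * m i) • c j

/-- The `𝔰𝔬(n,ℤ)`-action on `TBFFR[n]`: `f_B(τ, m) := (τ − ⟨m|B|·⟩, m)`. -/
def fB {n : ℕ} (B : Matrix (Fin n) (Fin n) ℤ) (h : TBH n) : TBH n :=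
  (fun c => h.1 c - braB B h.2 c, h.2)

/-- The `𝔰𝔬(n,ℤ)`-action on `TBFFR[n]`:
`η_B(a,a') := (the constant map with value ⌊a'|B|a⌋ mod ℤ, 0)`. -/
def ηB {n : ℕ} (B : Matrix (Fin n) (Fin n) ℤ) (a a' : Fin n → ℝ) : TBH n :=
  (fun _ => ((lbrak B a' a : ℝ) : Torus), 0)

/-- the left-leg crossed intertwiner `leleR : TD[n] → TBFFR[n]` is
strictly equivariant for the `𝔰𝔬(n,ℤ)`-actions by crossed intertwiners on both
sides; explicitly, for every skew-symmetric integer matrix `B`: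
(i) `id ∘ φ = φ ∘ φ_{e^B}`; (ii) `f_B ∘ f = f ∘ f_{e^B}`;
(iii) `η_B(φ(x₁),φ(x₂)) + f_B(η(x₁,x₂)) = η(φ_{e^B}(x₁),φ_{e^B}(x₂)) + f(η_{e^B}(x₁,x₂))`. -/
theorem leleR_strictly_equivariant (n : ℕ) (hn : 1 ≤ n)
    (B : Matrix (Fin n) (Fin n) ℤ) (hB : Bᵀ = -B) :
    (∀ x : TDG n, leleRφ (eBφ B x) = leleRφ x) ∧
    (∀ h : TDH n, fB B (leleRf h) = leleRf (eBf B h)) ∧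
    (∀ x₁ x₂ : TDG n,
        ηB B (leleRφ x₁) (leleRφ x₂) + fB B (leleRη x₁ x₂) =
          leleRη (eBφ B x₁) (eBφ B x₂) + leleRf (eBη B x₁ x₂)) := by
  have hs : ∀ i j, B j i = - B i j := fun i j => by
    have := congrFun (congrFun hB i) j
    simpa using this
  refine ⟨fun x => rfl, fun h => ?_, fun x₁ x₂ => ?_⟩
  · refine Prod.ext (funext fun c => ?_) rfl
    simp only [fB, leleRf, eBf, braB, add_smul, Finset.sum_smul, Finset.sum_add_distrib]
    have key : (∑ i, ∑ j, (B i j * h.1.1 j) • c i) = - ∑ i, ∑ j, (B i j * h.1.1 i) • c j := by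
      rw [Finset.sum_comm, ← Finset.sum_neg_distrib]
      refine Finset.sum_congr rfl fun i _ => ?_
      rw [← Finset.sum_neg_distrib]
      refine Finset.sum_congr rfl fun j _ => ?_
      rw [hs i j, neg_mul, neg_smul]
    rw [key]
    abel
  · refine Prod.ext (funext fun c => ?_) ?_
    · have key : lbrak B x₂.1 x₁.1 + TDpair x₁ x₂ =
          TDpair (eBφ B x₁) (eBφ B x₂) + lbrak B x₁.1 x₂.1 := by
        have h1 : lbrak B x₁.1 x₂.1 =
            ∑ i, ∑ j, if i < j then (B j i : ℝ) * x₁.1 j * x₂.1 i else 0 := by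
          rw [lbrak, Finset.sum_comm]
        rw [h1]
        simp only [lbrak, TDpair, eBφ, ← Finset.sum_add_distrib]
        refine Finset.sum_congr rfl fun i _ => ?_
        rw [add_mul, Finset.sum_mul, add_right_comm, ← Finset.sum_add_distrib]
        congr 1
        refine Finset.sum_congr rfl fun j _ => ?_
        have h2 : (B j i : ℝ) = - (B i j : ℝ) := by exact_mod_cast hs i j
        rcases lt_trichotomy i j with hij | hij | hij
        · simp only [hij, hij.not_gt, if_true, if_false, h2]; ring
        · subst hij
          have h3 : (B i i : ℝ) = 0 := by linarith
          simp [h3]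
        · simp only [hij, hij.not_gt, if_true, if_false]; ring
      have key' := congrArg (fun r : ℝ => (r : Torus)) key
      simp only [AddCircle.coe_add] at key'
      simpa [ηB, leleRφ, fB, leleRη, leleRf, eBη, braB] using key'
    · simp [ηB, fB, leleRη, leleRf, eBη]
end
end
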